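/- Let L be a Lie algebra over ℂ, p ≥ 1, and σ a Lie algebra automorphism of L with σ^p = id. Let 𝔫 ⊆ L be a Lie subalgebra with σ(𝔫) = 𝔫 and such that for every x ∈ 𝔫 the map ad x is locally nilpotent on L. Let λ : 𝔫 → ℂ be a Whittaker function such that the functions λ∘σⁱ restricted to 𝔫, for i = 0, 1, …, p−1, are pairwise distinct. Let W be a simple U(L)-module that is a Whittaker module of type λ, and let σ̂ be the induced ℂ-algebra automorphism of U(L) (the unique algebra automorphism with σ̂∘ι = ι∘σ). Then W, regarded by restriction as a module over the fixed subalgebra U(L)^{σ̂} = {u ∈ U(L) : σ̂(u) = u}, is a simple U(L)^{σ̂}-module. -/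

import Mathlib

/-!
For `x` in `𝔫` every vector of `W` is a generalized eigenvector of `x` with eigenvalue `λ(x)`: the
generating vector `w` is one, and since `ad x` is locally nilpotent the generalized eigenspaces of
`x` are `U(L)`-submodules. Pick `x` with `λ(x) ≠ λ(σʲ x)`. Then a high power of `x - λ(σʲ x)` is
injective on `W`, whereas its image under `σ̂ʲ` kills any prescribed vector. Multiplying such
elements for `0 < j < p` gives, for every `v ≠ 0`, some `u` with `u • v ≠ 0` and `σ̂ʲ(u) • v = 0`
for all these `j`. If `a • u • v` is the desired target, the orbit sum `∑ i < p, σ̂ⁱ(a u)` is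
`σ̂`-fixed and sends `v` to it. No division by `p` occurs, so this works in any characteristic.
-/

open Module.End (mem_maxGenEigenspace)
open UniversalEnvelopingAlgebra (ι)

local notation "𝒰" => UniversalEnvelopingAlgebra

section FixedSubalgebra

variable {R A W : Type*} [CommRing R] [Ring A] [Algebra R A] [AddCommGroup W] [Module A W]

theorem sum_range_pow_apply_mem_equalizer {τ : A →ₐ[R] A} {p : ℕ} (hτ : τ ^ p = 1) (a : A) :
    ∑ i ∈ Finset.range p, (τ ^ i) a ∈ AlgHom.equalizer τ (AlgHom.id R A) := by
  have shift : ∑ i ∈ Finset.range p, (τ ^ (i + 1)) a = ∑ i ∈ Finset.range p, (τ ^ i) a := by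
    apply add_right_cancel (b := (τ ^ 0) a)
    rw [← Finset.sum_range_succ' (fun i ↦ (τ ^ i) a), Finset.sum_range_succ, hτ, pow_zero]
  rw [AlgHom.mem_equalizer, map_sum, AlgHom.id_apply, ← shift]
  simp only [pow_succ', AlgHom.mul_apply]

theorem exists_smul_ne_zero_and_pow_apply_smul_eq_zero {τ : A →ₐ[R] A} {p : ℕ}
    (hsep : ∀ j, 0 < j → j < p → ∀ v v' : W, v ≠ 0 → ∃ a : A, a • v ≠ 0 ∧ (τ ^ j) a • v' = 0)
    {v : W} (hv : v ≠ 0) :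
    ∃ u : A, u • v ≠ 0 ∧ ∀ j, 0 < j → j < p → (τ ^ j) u • v = 0 := by
  induction p with
  | zero => exact ⟨1, by rwa [one_smul], by simp⟩
  | succ p ih =>
    obtain ⟨u, hu, hu_pow⟩ := ih fun j hj hjp ↦ hsep j hj (by lia)
    rcases p.eq_zero_or_pos with rfl | hp
    · exact ⟨u, hu, by lia⟩
    obtain ⟨a, ha, ha_pow⟩ := hsep p hp p.lt_succ_self (u • v) ((τ ^ p) u • v) hu
    refine ⟨a * u, by rwa [mul_smul], fun j hj hjp ↦ ?_⟩
    rw [map_mul, mul_smul]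
    rcases Nat.lt_succ_iff_lt_or_eq.1 hjp with hjp | rfl
    · rw [hu_pow j hj hjp, smul_zero]
    · exact ha_pow

/-- The separation hypothesis expresses that `W` is not isomorphic to its twists by `τ ^ j`. -/
theorem isSimpleModule_equalizer_of_separated [IsSimpleModule A W] {τ : A →ₐ[R] A} {p : ℕ}
    (hp : 0 < p) (hτ : τ ^ p = 1)
    (hsep : ∀ j, 0 < j → j < p → ∀ v v' : W, v ≠ 0 → ∃ a : A, a • v ≠ 0 ∧ (τ ^ j) a • v' = 0) :
    IsSimpleModule (AlgHom.equalizer τ (AlgHom.id R A)) W := by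
  refine isSimpleModule_iff_toSpanSingleton_surjective.2
    ⟨IsSimpleModule.nontrivial A W, fun v hv v' ↦ ?_⟩
  obtain ⟨u, hu, hu_pow⟩ := exists_smul_ne_zero_and_pow_apply_smul_eq_zero hsep hv
  obtain ⟨a, ha : a • u • v = v'⟩ := IsSimpleModule.toSpanSingleton_surjective A hu v'
  refine ⟨⟨_, sum_range_pow_apply_mem_equalizer hτ (a * u)⟩, ?_⟩
  have vanish : ∀ i ∈ Finset.range p, i ≠ 0 → (τ ^ i) (a * u) • v = 0 := fun i hi hi0 ↦ by
    rw [map_mul, mul_smul, hu_pow i (by lia) (Finset.mem_range.1 hi), smul_zero]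
  calc (∑ i ∈ Finset.range p, (τ ^ i) (a * u)) • v
      = (τ ^ 0) (a * u) • v := by
        rw [Finset.sum_smul, Finset.sum_eq_single_of_mem 0 (Finset.mem_range.2 hp) vanish]
    _ = v' := by rw [pow_zero, AlgHom.one_apply, mul_smul, ha]

end FixedSubalgebra

section GeneralizedEigenspace

variable {R M : Type*} [CommRing R] [AddCommGroup M] [Module R M]

/-- Local nilpotency of `f` is encoded below as `f.maxGenEigenspace 0 = ⊤`. -/
theorem maxGenEigenspace_zero_eq_top_iff {f : Module.End R M} :
    f.maxGenEigenspace 0 = ⊤ ↔ ∀ m, ∃ k : ℕ, f^[k] m = 0 := by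
  simp only [Submodule.eq_top_iff', mem_maxGenEigenspace, zero_smul, sub_zero,
    Module.End.pow_apply]

theorem maxGenEigenspace_eq_bot_of_eq_top [IsDomain R] [Module.IsTorsionFree R M]
    {f : Module.End R M} {c d : R} (hcd : c ≠ d) (hc : f.maxGenEigenspace c = ⊤) :
    f.maxGenEigenspace d = ⊥ :=
  top_disjoint.1 (hc ▸ f.disjoint_genEigenspace hcd ⊤ ⊤)

variable {A : Type*} [Ring A] [Algebra R A] [Module A M] [IsScalarTower R A M]

theorem mem_maxGenEigenspace_lsmul {a : A} {c : R} {m : M} :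
    m ∈ (Algebra.lsmul R R M a).maxGenEigenspace c ↔
      ∃ k : ℕ, (a - algebraMap R A c) ^ k • m = 0 := by
  have lsmul_sub : Algebra.lsmul R R M a - c • 1 = Algebra.lsmul R R M (a - algebraMap R A c) := by
    rw [map_sub, AlgHom.commutes, Algebra.algebraMap_eq_smul_one]
  simp only [mem_maxGenEigenspace, lsmul_sub, ← map_pow, Algebra.lsmul_apply]

theorem exists_smul_ne_zero_and_apply_smul_eq_zero [IsDomain R] [Module.IsTorsionFree R M]
    (φ : A →ₐ[R] A) {a : A} {c d : R} (hcd : c ≠ d)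
    (hc : (Algebra.lsmul R R M a).maxGenEigenspace c = ⊤)
    (hd : (Algebra.lsmul R R M (φ a)).maxGenEigenspace d = ⊤) (m m' : M) (hm : m ≠ 0) :
    ∃ b : A, b • m ≠ 0 ∧ φ b • m' = 0 := by
  obtain ⟨k, hk⟩ := mem_maxGenEigenspace_lsmul.1 (hd ▸ Submodule.mem_top : m' ∈ _)
  refine ⟨(a - algebraMap R A d) ^ k, fun h ↦ hm ?_, ?_⟩
  · rw [← Submodule.mem_bot R, ← maxGenEigenspace_eq_bot_of_eq_top hcd hc]
    exact mem_maxGenEigenspace_lsmul.2 ⟨k, h⟩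
  · rwa [map_pow, map_sub, AlgHom.commutes]

end GeneralizedEigenspace

section EnvelopingAlgebra

attribute [local instance 100] LieRing.ofAssociativeRing

variable {R L : Type*} [CommRing R] [LieRing L] [LieAlgebra R L]

theorem adjoin_range_universalEnvelopingAlgebra_ι :
    Algebra.adjoin R (Set.range (ι R : L → 𝒰 R L)) = ⊤ := by
  have mk_surjective : Function.Surjective (UniversalEnvelopingAlgebra.mkAlgHom R L) :=
    RingCon.mkₐ_surjective _
  have range_ι : Set.range (ι R : L → 𝒰 R L) =
      UniversalEnvelopingAlgebra.mkAlgHom R L '' Set.range (TensorAlgebra.ι R) := by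
    rw [← Set.range_comp]
    exact congrArg Set.range (funext fun x ↦ UniversalEnvelopingAlgebra.ι_apply R x)
  rw [range_ι, ← AlgHom.map_adjoin, TensorAlgebra.adjoin_range_ι, Algebra.map_top,
    (AlgHom.range_eq_top _).2 mk_surjective]

theorem pow_apply_universalEnvelopingAlgebra_ι {τ : 𝒰 R L →ₐ[R] 𝒰 R L} {σ : L → L}
    (hτ : ∀ y, τ (ι R y) = ι R (σ y)) (n : ℕ) (y : L) : (τ ^ n) (ι R y) = ι R (σ^[n] y) := by
  have semiconj : Function.Semiconj (ι R : L → 𝒰 R L) σ τ := fun y ↦ (hτ y).symm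
  rw [AlgHom.coe_pow, (semiconj.iterate_right n).eq]

theorem universalEnvelopingAlgebra_algHom_pow_eq_one {τ : 𝒰 R L →ₐ[R] 𝒰 R L} {σ : L → L}
    (hτ : ∀ y, τ (ι R y) = ι R (σ y)) {n : ℕ} (hσ : ∀ y, σ^[n] y = y) : τ ^ n = 1 :=
  UniversalEnvelopingAlgebra.hom_ext R <| LieHom.ext fun y ↦
    (pow_apply_universalEnvelopingAlgebra_ι hτ n y).trans (congrArg _ (hσ y))

variable {W : Type*} [AddCommGroup W] [Module R W] [Module (𝒰 R L) W] [IsScalarTower R (𝒰 R L) W]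

theorem ι_smul_mem_maxGenEigenspace {x y : L} {c : R} {v : W}
    (hy : y ∈ (LieAlgebra.ad R L x).maxGenEigenspace 0)
    (hv : v ∈ (Algebra.lsmul R R W (ι R x)).maxGenEigenspace c) :
    ι R y • v ∈ (Algebra.lsmul R R W (ι R x)).maxGenEigenspace c := by
  let : LieRingModule (𝒰 R L) W := LieRingModule.ofAssociativeModule
  have : LieModule R (𝒰 R L) W := LieModule.ofAssociativeModule
  let : LieRingModule L W := LieRingModule.compLieHom W (ι R)
  have : LieModule R L W := LieModule.compLieHom W (ι R)
  have lie_eq : ⁅y, v⁆ = ι R y • v := rfl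
  have toEnd_eq : LieModule.toEnd R L W x = Algebra.lsmul R R W (ι R x) := rfl
  rw [← toEnd_eq] at hv ⊢
  simpa only [zero_add, lie_eq] using LieModule.lie_mem_maxGenEigenspace_toEnd hy hv

theorem smul_mem_maxGenEigenspace {x : L} {c : R} {v : W}
    (hx : (LieAlgebra.ad R L x).maxGenEigenspace 0 = ⊤)
    (hv : v ∈ (Algebra.lsmul R R W (ι R x)).maxGenEigenspace c) (a : 𝒰 R L) :
    a • v ∈ (Algebra.lsmul R R W (ι R x)).maxGenEigenspace c := by
  have ha : a ∈ Algebra.adjoin R (Set.range (ι R : L → 𝒰 R L)) :=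
    adjoin_range_universalEnvelopingAlgebra_ι (R := R) (L := L) ▸ Algebra.mem_top
  induction ha using Algebra.adjoin_induction generalizing v with
  | mem _ hy =>
    obtain ⟨y, rfl⟩ := hy
    exact ι_smul_mem_maxGenEigenspace (hx ▸ Submodule.mem_top) hv
  | algebraMap r => exact algebraMap_smul (𝒰 R L) r v ▸ Submodule.smul_mem _ r hv
  | add a b _ _ iha ihb => exact add_smul a b v ▸ add_mem (iha hv) (ihb hv)
  | mul a b _ _ iha ihb => exact mul_smul a b v ▸ iha (ihb hv)

theorem maxGenEigenspace_eq_top_of_span_eq_top {x : L} {c : R} {w : W}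
    (hx : (LieAlgebra.ad R L x).maxGenEigenspace 0 = ⊤) (hgen : Submodule.span (𝒰 R L) {w} = ⊤)
    (hw : ι R x • w = c • w) : (Algebra.lsmul R R W (ι R x)).maxGenEigenspace c = ⊤ := by
  have w_mem : w ∈ (Algebra.lsmul R R W (ι R x)).maxGenEigenspace c :=
    Module.End.eigenspace_le_maxGenEigenspace (Module.End.mem_eigenspace_iff.2 hw)
  refine Submodule.eq_top_iff'.2 fun v ↦ ?_
  obtain ⟨a, rfl⟩ := Submodule.mem_span_singleton.1 (hgen ▸ Submodule.mem_top : v ∈ _)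
  exact smul_mem_maxGenEigenspace hx w_mem a

end EnvelopingAlgebra

theorem whittaker_module_simple_over_orbifold_general
    {K L : Type*} [Field K] [LieRing L] [LieAlgebra K L]
    {p : ℕ} (hp : 0 < p) {σ : L ≃ₗ⁅K⁆ L} (hσp : ∀ y, (⇑σ)^[p] y = y)
    {N : Set L} (hnil : ∀ x ∈ N, (LieAlgebra.ad K L x).maxGenEigenspace 0 = ⊤)
    {lam : N → K} (hdist : ∀ j, 0 < j → j < p →
      ∃ (x : N) (hxj : (⇑σ)^[j] x ∈ N), lam x ≠ lam ⟨(⇑σ)^[j] x, hxj⟩)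
    {W : Type*} [AddCommGroup W] [Module (𝒰 K L) W] [IsSimpleModule (𝒰 K L) W]
    {w : W} (hgen : Submodule.span (𝒰 K L) {w} = ⊤)
    (hw : ∀ x : N, ι K (x : L) • w = algebraMap K (𝒰 K L) (lam x) • w)
    {τ : 𝒰 K L →ₐ[K] 𝒰 K L} (hτ : ∀ y, τ (ι K y) = ι K (σ y)) :
    IsSimpleModule (AlgHom.equalizer τ (AlgHom.id K (𝒰 K L))) W := by
  let : Module K W := Module.compHom W (algebraMap K (𝒰 K L))
  have : IsScalarTower K (𝒰 K L) W := .of_algebraMap_smul fun _ _ ↦ rfl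
  have eigenspace_eq_top (x : N) :
      (Algebra.lsmul K K W (ι K (x : L))).maxGenEigenspace (lam x) = ⊤ :=
    maxGenEigenspace_eq_top_of_span_eq_top (hnil x x.2) hgen (hw x)
  refine isSimpleModule_equalizer_of_separated hp
    (universalEnvelopingAlgebra_algHom_pow_eq_one hτ hσp) fun j hj hjp ↦ ?_
  obtain ⟨x, hxj, hne⟩ := hdist j hj hjp
  refine exists_smul_ne_zero_and_apply_smul_eq_zero (τ ^ j) hne (eigenspace_eq_top x) ?_
  rw [pow_apply_universalEnvelopingAlgebra_ι hτ]
  exact eigenspace_eq_top ⟨_, hxj⟩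

/-- Let `σ` be a Lie algebra automorphism of `L` with `σ^p = id` preserving
a Lie subalgebra `𝔫` that acts ad-locally-nilpotently on `L`. Let `λ : 𝔫 → ℂ` be a Whittaker
function whose twists `λ∘σⁱ` (`i = 0, …, p−1`) are pairwise distinct on `𝔫`, and let `W` be a
simple Whittaker `U(L)`-module of type `λ`. Then `W` is simple over the fixed subalgebra
`U(L)^{σ̂}` of the induced algebra automorphism `σ̂` of `U(L)` (characterized by
`σ̂ ∘ ι = ι ∘ σ`). -/
theorem whittaker_module_simple_over_orbifold
    (L : Type*) [LieRing L] [LieAlgebra ℂ L]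
    (p : ℕ) (hp : 1 ≤ p)
    (σ : L ≃ₗ⁅ℂ⁆ L) (hσp : ∀ y : L, (⇑σ)^[p] y = y)
    (N : LieSubalgebra ℂ L) (hNstab : ∀ x : L, x ∈ N → σ x ∈ N)
    (hnil : ∀ x : N, ∀ y : L, ∃ k : ℕ, (fun z : L => ⁅(x : L), z⁆)^[k] y = 0)
    (lam : N →ₗ[ℂ] ℂ) (hlam : ∀ x y : N, lam ⁅x, y⁆ = 0)
    (hdist : ∀ i j : ℕ, i < p → j < p → i ≠ j →
      ∃ (x : L) (_ : x ∈ N) (hxi : (⇑σ)^[i] x ∈ N) (hxj : (⇑σ)^[j] x ∈ N),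
        lam ⟨(⇑σ)^[i] x, hxi⟩ ≠ lam ⟨(⇑σ)^[j] x, hxj⟩)
    (W : Type*) [AddCommGroup W] [Module (UniversalEnvelopingAlgebra ℂ L) W]
    (hW : IsSimpleModule (UniversalEnvelopingAlgebra ℂ L) W)
    (w : W) (hgen : Submodule.span (UniversalEnvelopingAlgebra ℂ L) {w} = ⊤)
    (hw : ∀ x : N, UniversalEnvelopingAlgebra.ι ℂ (x : L) • w =
      algebraMap ℂ (UniversalEnvelopingAlgebra ℂ L) (lam x) • w)
    (τ : UniversalEnvelopingAlgebra ℂ L →ₐ[ℂ] UniversalEnvelopingAlgebra ℂ L)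
    (hτ : ∀ y : L, τ (UniversalEnvelopingAlgebra.ι ℂ y) = UniversalEnvelopingAlgebra.ι ℂ (σ y)) :
    IsSimpleModule (AlgHom.equalizer τ (AlgHom.id ℂ (UniversalEnvelopingAlgebra ℂ L))) W := by
  exact whittaker_module_simple_over_orbifold_general (N := N) (σ := σ) (lam := lam) hp hσp
    (fun x hx ↦ maxGenEigenspace_zero_eq_top_iff.2 (hnil ⟨x, hx⟩))
    (fun j hj hjp ↦ have ⟨x, hx, _, hxj, hne⟩ := hdist 0 j hp hjp hj.ne; ⟨⟨x, hx⟩, hxj, hne⟩)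
    hgen hw hτ
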